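/- arXiv:1005.1183 — 3 statements merged into one kernel-verified Lean document; each statement's English description precedes it below -/
import Mathlib

section
/- Let ρ, σ ∈ ℝ satisfy 1 − σ² > 0 and 1 − 2ρ² + σ > 0, set ξ = 1 − 2ρ² + σ, η = (1+σ)/(1−σ), Q(x,y) = (1−ρ²)x² − 2(σ−ρ²)xy + (1−ρ²)y², and define f(x,y) = (1/(2π))·exp((ρx + ρy − √η·√(Q(x,y)))/ξ)/√(Q(x,y)) for (x,y) ≠ (0,0). Then for all u, v ∈ ℝ, the function (x,y) ↦ f(x,y)·exp(i(ux+vy)) is integrable on ℝ² and ∫∫_{ℝ²} f(x,y) exp(i(ux+vy)) dx dy = [1 + (1−ρ²)u² − 2iρu + (1−ρ²)v² − 2iρv + 2(σ−ρ²)uv]^{−1/2}, where the complex power is the principal branch. -/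
open MeasureTheory

/-- The quadratic form `Q(x,y) = (1-ρ²)x² - 2(σ-ρ²)xy + (1-ρ²)y²`. -/
noncomputable def Qform (ρ σ x y : ℝ) : ℝ :=
  (1 - ρ ^ 2) * x ^ 2 - 2 * (σ - ρ ^ 2) * x * y + (1 - ρ ^ 2) * y ^ 2

/-- The joint density of `(AC, BC)`. -/
noncomputable def jointDensity (ρ σ x y : ℝ) : ℝ :=
  (1 / (2 * Real.pi)) *
    Real.exp ((ρ * x + ρ * y -
      Real.sqrt ((1 + σ) / (1 - σ)) * Real.sqrt (Qform ρ σ x y)) / (1 - 2 * ρ ^ 2 + σ)) /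
    Real.sqrt (Qform ρ σ x y)

open Set Filter Topology

/-- The error function, up to normalization, used as a primitive of the Gaussian. -/
noncomputable def gaussPrimitive (z : ℝ) : ℝ := ∫ w in (0 : ℝ)..z, Real.exp (-1 * w ^ 2)

theorem hasDerivAt_gaussPrimitive (z : ℝ) :
    HasDerivAt gaussPrimitive (Real.exp (-1 * z ^ 2)) z := by
  have hc : Continuous fun w : ℝ => Real.exp (-1 * w ^ 2) := by fun_prop
  exact intervalIntegral.integral_hasDerivAt_right (hc.intervalIntegrable _ _)
    (hc.stronglyMeasurableAtFilter _ _) hc.continuousAt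

theorem tendsto_gaussPrimitive_atTop :
    Tendsto gaussPrimitive atTop (𝓝 (√Real.pi / 2)) := by
  have h := intervalIntegral_tendsto_integral_Ioi (0 : ℝ)
    (integrable_exp_neg_mul_sq (b := 1) one_pos).integrableOn tendsto_id
  rw [integral_gaussian_Ioi, div_one] at h
  exact h

theorem gaussPrimitive_neg (z : ℝ) : gaussPrimitive (-z) = -gaussPrimitive z := by
  have h := intervalIntegral.integral_comp_neg (a := 0) (b := z)
    (fun w : ℝ => Real.exp (-1 * w ^ 2))
  simp only [neg_sq, neg_zero] at h
  unfold gaussPrimitive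
  rw [h, intervalIntegral.integral_symm]

theorem tendsto_gaussPrimitive_atBot :
    Tendsto gaussPrimitive atBot (𝓝 (-(√Real.pi / 2))) := by
  have h := (tendsto_gaussPrimitive_atTop.comp tendsto_neg_atBot_atTop).neg
  refine h.congr fun z => ?_
  simp [gaussPrimitive_neg]

/-- The Laplace-type integral of the inverse Gaussian density. -/
theorem integral_Ioi_inv_sq_mul_exp {a b : ℝ} (ha : 0 < a) (hb : 0 < b) :
    ∫ c in Ioi (0 : ℝ), 1 / c ^ 2 * Real.exp (-(b / c) ^ 2 - (a * c) ^ 2) =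
      √Real.pi / (2 * b) * Real.exp (-(2 * a * b)) := by
  let H : ℝ → ℝ := fun c => -(1 / (2 * b)) *
    (Real.exp (2 * a * b) * gaussPrimitive (b / c + a * c) +
      Real.exp (-(2 * a * b)) * gaussPrimitive (b / c - a * c))
  have hdiv : Tendsto (fun c : ℝ => b / c) (𝓝[>] 0) atTop := by
    simpa [div_eq_mul_inv] using tendsto_inv_nhdsGT_zero.const_mul_atTop hb
  have hlin : Tendsto (fun c : ℝ => a * c) (𝓝[>] 0) (𝓝 0) := by
    have : Continuous fun c : ℝ => a * c := by fun_prop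
    simpa using (this.tendsto 0).mono_left nhdsWithin_le_nhds
  have hdiv' : Tendsto (fun c : ℝ => b / c) atTop (𝓝 0) := tendsto_const_nhds.div_atTop tendsto_id
  have hlin' : Tendsto (fun c : ℝ => a * c) atTop atTop := tendsto_id.const_mul_atTop ha
  have h0 : Tendsto H (𝓝[>] 0) (𝓝 (-(1 / (2 * b)) *
      (Real.exp (2 * a * b) * (√Real.pi / 2) + Real.exp (-(2 * a * b)) * (√Real.pi / 2)))) := by
    refine (((tendsto_gaussPrimitive_atTop.comp (hdiv.atTop_add hlin)).const_mul _).add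
      ((tendsto_gaussPrimitive_atTop.comp ?_).const_mul _)).const_mul _
    simpa [sub_eq_add_neg] using hdiv.atTop_add hlin.neg
  have h1 : Tendsto H atTop (𝓝 (-(1 / (2 * b)) *
      (Real.exp (2 * a * b) * (√Real.pi / 2) + Real.exp (-(2 * a * b)) * (-(√Real.pi / 2))))) := by
    refine (((tendsto_gaussPrimitive_atTop.comp (hdiv'.add_atTop hlin')).const_mul _).add
      ((tendsto_gaussPrimitive_atBot.comp ?_).const_mul _)).const_mul _
    simpa [sub_eq_add_neg] using
      hdiv'.add_atBot (tendsto_neg_atTop_atBot.comp hlin')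
  have hd : ∀ c ∈ Ioi (0 : ℝ), HasDerivAt H
      (1 / c ^ 2 * Real.exp (-(b / c) ^ 2 - (a * c) ^ 2)) c := by
    intro c hc
    have hc0 : c ≠ 0 := (mem_Ioi.1 hc).ne'
    have hi : HasDerivAt (fun c : ℝ => b / c) (b * -(c ^ 2)⁻¹) c := by
      simpa [div_eq_mul_inv] using (hasDerivAt_inv hc0).const_mul b
    have hl : HasDerivAt (fun c : ℝ => a * c) a c := by
      simpa using (hasDerivAt_id c).const_mul a
    have h := ((((hasDerivAt_gaussPrimitive (b / c + a * c)).comp c (hi.add hl)).const_mul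
      (Real.exp (2 * a * b))).add (((hasDerivAt_gaussPrimitive (b / c - a * c)).comp c
        (hi.sub hl)).const_mul (Real.exp (-(2 * a * b))))).const_mul (-(1 / (2 * b)))
    refine h.congr_deriv ?_
    have e1 : Real.exp (2 * a * b) * Real.exp (-1 * (b / c + a * c) ^ 2) =
        Real.exp (-(b / c) ^ 2 - (a * c) ^ 2) := by
      rw [← Real.exp_add]; congr 1; field_simp; ring
    have e2 : Real.exp (-(2 * a * b)) * Real.exp (-1 * (b / c - a * c) ^ 2) =
        Real.exp (-(b / c) ^ 2 - (a * c) ^ 2) := by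
      rw [← Real.exp_add]; congr 1; field_simp; ring
    rw [← mul_assoc, ← mul_assoc, e1, e2]
    field_simp
    ring
  set m := -(1 / (2 * b)) *
      (Real.exp (2 * a * b) * (√Real.pi / 2) + Real.exp (-(2 * a * b)) * (√Real.pi / 2))
  have hcont : ContinuousWithinAt (Function.update H 0 m) (Ici 0) 0 := by
    rw [continuousWithinAt_update_same]
    simpa using h0
  have hd' : ∀ c ∈ Ioi (0 : ℝ), HasDerivAt (Function.update H 0 m)
      (1 / c ^ 2 * Real.exp (-(b / c) ^ 2 - (a * c) ^ 2)) c := by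
    intro c hc
    refine (hd c hc).congr_of_eventuallyEq ?_
    filter_upwards [isOpen_Ioi.mem_nhds hc] with y hy
    exact Function.update_of_ne (mem_Ioi.1 hy).ne' _ _
  have h1' := h1.congr' (f₂ := Function.update H 0 m) (by
    filter_upwards [Ioi_mem_atTop (0 : ℝ)] with y hy
    exact (Function.update_of_ne (mem_Ioi.1 hy).ne' _ _).symm)
  rw [integral_Ioi_of_hasDerivAt_of_nonneg hcont hd' (fun c _ => by positivity) h1',
    Function.update_self]
  simp only [m]
  field_simp
  ring

theorem integral_norm_eq_norm_integral_of_eq {α : Type*} [MeasurableSpace α] {μ : Measure α}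
    {f g : α → ℂ} (h : ∀ x, g x = (‖f x‖ : ℝ)) : ∫ x, ‖f x‖ ∂μ = ‖∫ x, g x ∂μ‖ := by
  simp_rw [h]
  rw [integral_complex_ofReal, Complex.norm_real, Real.norm_of_nonneg]
  exact integral_nonneg fun _ => norm_nonneg _

theorem cpow_half_ofReal {r : ℝ} (hr : 0 ≤ r) : (r : ℂ) ^ (1 / 2 : ℂ) = (√r : ℝ) := by
  rw [Real.sqrt_eq_rpow, Complex.ofReal_cpow hr]; norm_num

/-- Slicing a two-dimensional Gaussian integral along horizontal lines. -/
theorem integral_cexp_quadratic_slice {p t : ℝ} (q : ℝ) (ht : 0 < t) (hp : 0 < p) (l₁ l₂ : ℂ)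
    (y : ℝ) :
    Integrable (fun x : ℝ => Complex.exp
        (-t * (p * x ^ 2 - 2 * q * x * y + p * y ^ 2) + l₁ * x + l₂ * y)) ∧
      ∫ x : ℝ, Complex.exp (-t * (p * x ^ 2 - 2 * q * x * y + p * y ^ 2) + l₁ * x + l₂ * y) =
        (√(Real.pi / (t * p)) : ℝ) * Complex.exp ((-(t * (p ^ 2 - q ^ 2) / p : ℝ) : ℂ) * y ^ 2 +
          (l₂ + l₁ * q / p) * y + l₁ ^ 2 / (4 * (t * p))) := by
  have hb : (-(t * p : ℂ)).re < 0 := by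
    rw [← Complex.ofReal_mul, ← Complex.ofReal_neg, Complex.ofReal_re]
    have := mul_pos ht hp
    linarith
  have ht' : (t : ℂ) ≠ 0 := by exact_mod_cast ht.ne'
  have hp' : (p : ℂ) ≠ 0 := by exact_mod_cast hp.ne'
  have e : ∀ x : ℝ, -(t : ℂ) * (p * x ^ 2 - 2 * q * x * y + p * y ^ 2) + l₁ * x + l₂ * y =
      -(t * p : ℂ) * x ^ 2 + (2 * t * q * y + l₁) * x + (-t * p * y ^ 2 + l₂ * y) := by
    intro x; ring
  simp_rw [e]
  refine ⟨integrable_cexp_quadratic' hb _ _, ?_⟩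
  rw [integral_cexp_quadratic hb, neg_neg, ← Complex.ofReal_mul, ← Complex.ofReal_div,
    cpow_half_ofReal (by positivity)]
  congr 2
  push_cast
  field_simp
  ring

theorem integral_prod_cexp_quadratic {p q t : ℝ} (ht : 0 < t) (hp : 0 < p)
    (hD : 0 < p ^ 2 - q ^ 2) (l₁ l₂ : ℂ) :
    Integrable (fun z : ℝ × ℝ => Complex.exp
        (-t * (p * z.1 ^ 2 - 2 * q * z.1 * z.2 + p * z.2 ^ 2) + l₁ * z.1 + l₂ * z.2)) ∧
      ∫ z : ℝ × ℝ, Complex.exp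
        (-t * (p * z.1 ^ 2 - 2 * q * z.1 * z.2 + p * z.2 ^ 2) + l₁ * z.1 + l₂ * z.2) =
        (Real.pi / (t * √(p ^ 2 - q ^ 2)) : ℝ) * Complex.exp
          ((p * l₁ ^ 2 + 2 * q * l₁ * l₂ + p * l₂ ^ 2) / (4 * t * (p ^ 2 - q ^ 2))) := by
  have hb : (-(t * (p ^ 2 - q ^ 2) / p : ℝ) : ℂ).re < 0 := by
    rw [← Complex.ofReal_neg, Complex.ofReal_re]
    have : 0 < t * (p ^ 2 - q ^ 2) / p := by positivity
    linarith
  have hint : Integrable (fun z : ℝ × ℝ => Complex.exp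
      (-t * (p * z.1 ^ 2 - 2 * q * z.1 * z.2 + p * z.2 ^ 2) + l₁ * z.1 + l₂ * z.2)) := by
    rw [Measure.volume_eq_prod, integrable_prod_iff' (by fun_prop)]
    refine ⟨.of_forall fun y => (integral_cexp_quadratic_slice q ht hp l₁ l₂ y).1, ?_⟩
    have hn : ∀ y : ℝ, ∫ x : ℝ, ‖Complex.exp
        (-t * (p * x ^ 2 - 2 * q * x * y + p * y ^ 2) + l₁ * x + l₂ * y)‖ = _ := fun y =>
      integral_norm_eq_norm_integral_of_eq (g := fun x : ℝ => Complex.exp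
        (-t * (p * x ^ 2 - 2 * q * x * y + p * y ^ 2) + (l₁.re : ℂ) * x + (l₂.re : ℂ) * y))
        fun x => by
          rw [Complex.norm_exp, Complex.ofReal_exp]
          congr 1
          norm_cast
          simp [-Complex.ofReal_pow]
    simp only [hn, (integral_cexp_quadratic_slice q ht hp _ _ _).2]
    exact ((integrable_cexp_quadratic' hb _ _).const_mul _).norm
  refine ⟨hint, ?_⟩
  rw [Measure.volume_eq_prod] at hint ⊢
  rw [integral_prod_symm _ hint]
  simp only [(integral_cexp_quadratic_slice q ht hp l₁ l₂ _).2]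
  rw [integral_const_mul, integral_cexp_quadratic hb, neg_neg, ← Complex.ofReal_div,
    cpow_half_ofReal (by positivity), ← mul_assoc, ← Complex.ofReal_mul]
  have ht' : (t : ℂ) ≠ 0 := by exact_mod_cast ht.ne'
  have hp' : (p : ℂ) ≠ 0 := by exact_mod_cast hp.ne'
  have hD' : (p ^ 2 - q ^ 2 : ℂ) ≠ 0 := by exact_mod_cast hD.ne'
  congr 2
  · rw [← Real.sqrt_mul (by positivity), Real.sqrt_eq_iff_mul_self_eq (by positivity)
      (by positivity)]
    have := Real.mul_self_sqrt hD.le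
    field_simp
    rw [Real.sq_sqrt hD.le]
  · push_cast
    field_simp
    ring

theorem integral_gaussian_mixture {p q A : ℝ} (hp : 0 < p) (hD : 0 < p ^ 2 - q ^ 2) {l₁ l₂ K : ℂ}
    (hK : K = A - (p * l₁ ^ 2 + 2 * q * l₁ * l₂ + p * l₂ ^ 2) / (4 * (p ^ 2 - q ^ 2)))
    (hK0 : 0 < K.re)
    (hK1 : 0 < A - (p * l₁.re ^ 2 + 2 * q * l₁.re * l₂.re + p * l₂.re ^ 2) /
      (4 * (p ^ 2 - q ^ 2))) :
    Integrable (fun z : ℝ × ℝ => ∫ c in Ioi (0 : ℝ), (1 / c ^ 2 : ℝ) * Complex.exp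
        (-(1 / c ^ 2 : ℝ) * (p * z.1 ^ 2 - 2 * q * z.1 * z.2 + p * z.2 ^ 2) +
          l₁ * z.1 + l₂ * z.2 - A * c ^ 2)) ∧
      ∫ z : ℝ × ℝ, ∫ c in Ioi (0 : ℝ), (1 / c ^ 2 : ℝ) * Complex.exp
        (-(1 / c ^ 2 : ℝ) * (p * z.1 ^ 2 - 2 * q * z.1 * z.2 + p * z.2 ^ 2) +
          l₁ * z.1 + l₂ * z.2 - A * c ^ 2) =
        (Real.pi / √(p ^ 2 - q ^ 2) : ℝ) * ((Real.pi / K) ^ (1 / 2 : ℂ) / 2) := by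
  have hD' : (p ^ 2 - q ^ 2 : ℂ) ≠ 0 := by exact_mod_cast hD.ne'
  have hs : 0 < √(p ^ 2 - q ^ 2) := Real.sqrt_pos.2 hD
  have hsplit : ∀ (l₁ l₂ : ℂ) (c : ℝ) (z : ℝ × ℝ), ((1 / c ^ 2 : ℝ) : ℂ) * Complex.exp
        (-(1 / c ^ 2 : ℝ) * (p * z.1 ^ 2 - 2 * q * z.1 * z.2 + p * z.2 ^ 2) +
          l₁ * z.1 + l₂ * z.2 - A * c ^ 2) =
      ((1 / c ^ 2 : ℝ) * Complex.exp (-A * c ^ 2)) * Complex.exp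
        (-(1 / c ^ 2 : ℝ) * (p * z.1 ^ 2 - 2 * q * z.1 * z.2 + p * z.2 ^ 2) +
          l₁ * z.1 + l₂ * z.2) := by
    intro l₁ l₂ c z
    rw [mul_assoc (((1 / c ^ 2 : ℝ) : ℂ)), ← Complex.exp_add]
    congr 2
    ring
  have hinner : ∀ (l₁ l₂ : ℂ) (c : ℝ), c ∈ Ioi (0 : ℝ) →
      Integrable (fun z : ℝ × ℝ => ((1 / c ^ 2 : ℝ) : ℂ) * Complex.exp
        (-(1 / c ^ 2 : ℝ) * (p * z.1 ^ 2 - 2 * q * z.1 * z.2 + p * z.2 ^ 2) +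
          l₁ * z.1 + l₂ * z.2 - A * c ^ 2)) ∧
      ∫ z : ℝ × ℝ, ((1 / c ^ 2 : ℝ) : ℂ) * Complex.exp
        (-(1 / c ^ 2 : ℝ) * (p * z.1 ^ 2 - 2 * q * z.1 * z.2 + p * z.2 ^ 2) +
          l₁ * z.1 + l₂ * z.2 - A * c ^ 2) = (Real.pi / √(p ^ 2 - q ^ 2) : ℝ) *
        Complex.exp (-(A - (p * l₁ ^ 2 + 2 * q * l₁ * l₂ + p * l₂ ^ 2) /
          (4 * (p ^ 2 - q ^ 2))) * c ^ 2) := by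
    intro l₁ l₂ c hc
    rw [mem_Ioi] at hc
    have hc' : (c : ℂ) ≠ 0 := by exact_mod_cast hc.ne'
    have hcs : (√(p ^ 2 - q ^ 2) : ℂ) ≠ 0 := by exact_mod_cast hs.ne'
    have h := integral_prod_cexp_quadratic (t := 1 / c ^ 2) (by positivity) hp hD l₁ l₂
    simp_rw [hsplit]
    refine ⟨h.1.const_mul _, ?_⟩
    rw [integral_const_mul, h.2]
    have : Complex.exp (-(A - (p * l₁ ^ 2 + 2 * q * l₁ * l₂ + p * l₂ ^ 2) /
          (4 * (p ^ 2 - q ^ 2))) * c ^ 2) = Complex.exp (-A * c ^ 2) * Complex.exp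
        ((p * l₁ ^ 2 + 2 * q * l₁ * l₂ + p * l₂ ^ 2) /
          (4 * (1 / c ^ 2 : ℝ) * (p ^ 2 - q ^ 2))) := by
      rw [← Complex.exp_add]
      congr 1
      push_cast
      field_simp
      ring
    rw [this]
    push_cast
    field_simp
  have hgauss : ∀ {K : ℂ}, 0 < K.re → Integrable (fun c : ℝ => Complex.exp (-K * c ^ 2)) := by
    intro K hK
    simpa using integrable_cexp_quadratic hK 0 0
  have hint : Integrable (fun w : (ℝ × ℝ) × ℝ => ((1 / w.2 ^ 2 : ℝ) : ℂ) * Complex.exp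
        (-(1 / w.2 ^ 2 : ℝ) * (p * w.1.1 ^ 2 - 2 * q * w.1.1 * w.1.2 + p * w.1.2 ^ 2) +
          l₁ * w.1.1 + l₂ * w.1.2 - A * w.2 ^ 2))
        ((volume : Measure (ℝ × ℝ)).prod (volume.restrict (Ioi (0 : ℝ)))) := by
    rw [integrable_prod_iff' (by
      refine Measurable.aestronglyMeasurable ?_
      fun_prop)]
    refine ⟨(ae_restrict_iff' measurableSet_Ioi).2 (.of_forall fun c hc =>
      (hinner l₁ l₂ c hc).1), ?_⟩
    have hn : ∀ c ∈ Ioi (0 : ℝ), ∫ z : ℝ × ℝ, ‖((1 / c ^ 2 : ℝ) : ℂ) * Complex.exp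
        (-(1 / c ^ 2 : ℝ) * (p * z.1 ^ 2 - 2 * q * z.1 * z.2 + p * z.2 ^ 2) +
          l₁ * z.1 + l₂ * z.2 - A * c ^ 2)‖ = _ := fun c hc =>
      (integral_norm_eq_norm_integral_of_eq (g := fun z : ℝ × ℝ => ((1 / c ^ 2 : ℝ) : ℂ) *
        Complex.exp (-(1 / c ^ 2 : ℝ) * (p * z.1 ^ 2 - 2 * q * z.1 * z.2 + p * z.2 ^ 2) +
          (l₁.re : ℂ) * z.1 + (l₂.re : ℂ) * z.2 - A * c ^ 2))
        fun z => by
          rw [norm_mul, Complex.norm_exp, Complex.ofReal_mul, Complex.ofReal_exp,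
            Complex.norm_real, Real.norm_of_nonneg (by positivity)]
          congr 2
          norm_cast
          simp [-Complex.ofReal_pow]).trans
        (congrArg norm (hinner l₁.re l₂.re c hc).2)
    refine IntegrableOn.congr_fun ?_ (fun c hc => (hn c hc).symm) measurableSet_Ioi
    refine (((hgauss ?_).const_mul _).norm).integrableOn
    exact_mod_cast hK1
  refine ⟨hint.integral_prod_left, ?_⟩
  rw [integral_integral_swap hint, setIntegral_congr_fun measurableSet_Ioi
    (fun c hc => (hinner l₁ l₂ c hc).2), integral_const_mul, ← hK,
    integral_gaussian_complex_Ioi hK0]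

/-- The joint density as a scale mixture of Gaussians. -/
theorem jointDensity_mul_cexp_eq {ρ σ x y : ℝ} (hη : 0 < (1 + σ) / (1 - σ))
    (hξ : 0 < 1 - 2 * ρ ^ 2 + σ) (hQ : 0 < Qform ρ σ x y) (u v : ℝ) :
    (jointDensity ρ σ x y : ℂ) * Complex.exp (Complex.I * (u * x + v * y)) =
      (1 / (Real.pi * √Real.pi) : ℝ) * ∫ c in Ioi (0 : ℝ), (1 / c ^ 2 : ℝ) * Complex.exp
        (-(1 / c ^ 2 : ℝ) * (((1 - ρ ^ 2 : ℝ) : ℂ) * x ^ 2 - 2 * ((σ - ρ ^ 2 : ℝ) : ℂ) * x * y +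
          ((1 - ρ ^ 2 : ℝ) : ℂ) * y ^ 2) +
          ((ρ / (1 - 2 * ρ ^ 2 + σ) : ℝ) + Complex.I * u) * x +
          ((ρ / (1 - 2 * ρ ^ 2 + σ) : ℝ) + Complex.I * v) * y -
          ((1 + σ) / (1 - σ) / (4 * (1 - 2 * ρ ^ 2 + σ) ^ 2) : ℝ) * c ^ 2) := by
  have hr := Real.sqrt_pos.2 hQ
  have hα := Real.sqrt_pos.2 hη
  have key := integral_Ioi_inv_sq_mul_exp
    (a := √((1 + σ) / (1 - σ)) / (2 * (1 - 2 * ρ ^ 2 + σ))) (by positivity) hr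
  have hint : ∀ c : ℝ, ((1 / c ^ 2 : ℝ) : ℂ) * Complex.exp
        (-(1 / c ^ 2 : ℝ) * (((1 - ρ ^ 2 : ℝ) : ℂ) * x ^ 2 - 2 * ((σ - ρ ^ 2 : ℝ) : ℂ) * x * y +
          ((1 - ρ ^ 2 : ℝ) : ℂ) * y ^ 2) +
          ((ρ / (1 - 2 * ρ ^ 2 + σ) : ℝ) + Complex.I * u) * x +
          ((ρ / (1 - 2 * ρ ^ 2 + σ) : ℝ) + Complex.I * v) * y -
          ((1 + σ) / (1 - σ) / (4 * (1 - 2 * ρ ^ 2 + σ) ^ 2) : ℝ) * c ^ 2) =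
      ((1 / c ^ 2 * Real.exp (-(√(Qform ρ σ x y) / c) ^ 2 -
        (√((1 + σ) / (1 - σ)) / (2 * (1 - 2 * ρ ^ 2 + σ)) * c) ^ 2) : ℝ) : ℂ) *
      Complex.exp (((ρ * x + ρ * y) / (1 - 2 * ρ ^ 2 + σ) : ℝ) +
        Complex.I * (u * x + v * y)) := by
    intro c
    rw [Complex.ofReal_mul, mul_assoc ((1 / c ^ 2 : ℝ) : ℂ), Complex.ofReal_exp,
      ← Complex.exp_add, div_pow, mul_pow,
      div_pow, Real.sq_sqrt hQ.le, Real.sq_sqrt hη.le, Qform]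
    congr 2
    push_cast
    ring
  simp_rw [hint]
  rw [integral_mul_const, integral_complex_ofReal, key, Complex.exp_add, ← mul_assoc, ← mul_assoc,
    ← Complex.ofReal_exp]
  congr 1
  rw [← Complex.ofReal_mul, ← Complex.ofReal_mul]
  congr 1
  have e : Real.exp ((ρ * x + ρ * y - √((1 + σ) / (1 - σ)) * √(Qform ρ σ x y)) /
      (1 - 2 * ρ ^ 2 + σ)) =
      Real.exp (-(2 * (√((1 + σ) / (1 - σ)) / (2 * (1 - 2 * ρ ^ 2 + σ))) * √(Qform ρ σ x y))) *
        Real.exp ((ρ * x + ρ * y) / (1 - 2 * ρ ^ 2 + σ)) := by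
    rw [← Real.exp_add]
    congr 1
    field_simp
    ring
  rw [jointDensity, e]
  have hpi := Real.sqrt_pos.2 Real.pi_pos
  field_simp

theorem quadForm_pos {p q x y : ℝ} (hp : 0 < p) (hD : 0 < p ^ 2 - q ^ 2) (h : (x, y) ≠ (0, 0)) :
    0 < p * x ^ 2 - 2 * q * x * y + p * y ^ 2 := by
  have e : p * (p * x ^ 2 - 2 * q * x * y + p * y ^ 2) =
      (p * x - q * y) ^ 2 + (p ^ 2 - q ^ 2) * y ^ 2 := by ring
  refine pos_of_mul_pos_right ?_ hp.le
  rw [e]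
  by_cases hy : y = 0
  · subst hy
    have hx : x ≠ 0 := fun hx => h (by rw [hx])
    have : 0 < (p * x) ^ 2 := by positivity
    simpa using this
  · have : 0 < (p ^ 2 - q ^ 2) * y ^ 2 := by positivity
    positivity

theorem ofReal_mul_cpow {r : ℝ} (hr : 0 < r) {x : ℂ} (hx : x ≠ 0) (s : ℂ) :
    ((r : ℂ) * x) ^ s = (r : ℂ) ^ s * x ^ s := by
  have hr' : (r : ℂ) ≠ 0 := by exact_mod_cast hr.ne'
  rw [Complex.cpow_def_of_ne_zero (mul_ne_zero hr' hx), Complex.cpow_def_of_ne_zero hr',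
    Complex.cpow_def_of_ne_zero hx, Complex.log_ofReal_mul hr hx, ← Complex.exp_add,
    Complex.ofReal_log hr.le, add_mul]

theorem cpow_half_pi_div {D : ℝ} (hD : 0 < D) {K T : ℂ} (hT : 0 < T.re) (hK : 4 * D * K = T) :
    ((1 / (Real.pi * √Real.pi) : ℝ) : ℂ) *
      ((Real.pi / √D : ℝ) * ((Real.pi / K) ^ (1 / 2 : ℂ) / 2)) = T ^ (-(1 : ℂ) / 2) := by
  have hD' : (D : ℂ) ≠ 0 := by exact_mod_cast hD.ne'
  have hT0 : T ≠ 0 := fun h => by simp [h] at hT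
  have hK0 : K ≠ 0 := fun h => hT0 (by rw [← hK, h, mul_zero])
  have harg : T.arg ≠ Real.pi := fun h => by
    have := (Complex.arg_eq_pi_iff.1 h).1
    linarith
  have e : (Real.pi / K : ℂ) = ((4 * D * Real.pi : ℝ) : ℂ) * T⁻¹ := by
    rw [← hK]
    push_cast
    field_simp
  have hs : √(4 * D * Real.pi) = 2 * √D * √Real.pi := by
    rw [Real.sqrt_mul (by positivity), Real.sqrt_mul (by norm_num)]
    congr 2
    rw [show (4 : ℝ) = 2 ^ 2 by norm_num, Real.sqrt_sq (by norm_num)]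
  rw [e, ofReal_mul_cpow (by positivity) (inv_ne_zero hT0), cpow_half_ofReal (by positivity),
    Complex.inv_cpow _ _ harg,
    neg_div, Complex.cpow_neg, hs]
  have h1 : (√D : ℂ) ≠ 0 := by exact_mod_cast (Real.sqrt_pos.2 hD).ne'
  have h2 : (√Real.pi : ℂ) ≠ 0 := by exact_mod_cast (Real.sqrt_pos.2 Real.pi_pos).ne'
  have h3 : (Real.pi : ℂ) ≠ 0 := by exact_mod_cast Real.pi_ne_zero
  push_cast
  field_simp

theorem density_cf_fourier_pair (ρ σ : ℝ) (h1 : 1 - σ ^ 2 > 0) (h2 : 1 - 2 * ρ ^ 2 + σ > 0) :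
    ∀ u v : ℝ,
      Integrable (fun p : ℝ × ℝ =>
        (jointDensity ρ σ p.1 p.2 : ℂ) * Complex.exp (Complex.I * (u * p.1 + v * p.2))) ∧
      (∫ p : ℝ × ℝ,
        (jointDensity ρ σ p.1 p.2 : ℂ) * Complex.exp (Complex.I * (u * p.1 + v * p.2))) =
      (1 + (1 - (ρ : ℂ) ^ 2) * u ^ 2 - 2 * Complex.I * ρ * u +
        (1 - (ρ : ℂ) ^ 2) * v ^ 2 - 2 * Complex.I * ρ * v +
        2 * ((σ : ℂ) - (ρ : ℂ) ^ 2) * u * v) ^ (-(1 : ℂ) / 2) := by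
  intro u v
  have hσ : σ < 1 := by nlinarith
  have hσ' : -1 < σ := by nlinarith
  have hσm : 0 < 1 - σ := by linarith
  have hη : 0 < (1 + σ) / (1 - σ) := div_pos (by linarith) hσm
  have hp : 0 < 1 - ρ ^ 2 := by linarith
  have hDeq : (1 - ρ ^ 2) ^ 2 - (σ - ρ ^ 2) ^ 2 = (1 - σ) * (1 - 2 * ρ ^ 2 + σ) := by ring
  have hD : 0 < (1 - ρ ^ 2) ^ 2 - (σ - ρ ^ 2) ^ 2 := hDeq ▸ mul_pos hσm h2
  set ξ := 1 - 2 * ρ ^ 2 + σ with hξ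
  have hA : (1 + σ) / (1 - σ) / (4 * ξ ^ 2) -
      ((1 - ρ ^ 2) * (ρ / ξ) ^ 2 + 2 * (σ - ρ ^ 2) * (ρ / ξ) * (ρ / ξ) +
        (1 - ρ ^ 2) * (ρ / ξ) ^ 2) / (4 * ((1 - ρ ^ 2) ^ 2 - (σ - ρ ^ 2) ^ 2)) =
      1 / (4 * ((1 - ρ ^ 2) ^ 2 - (σ - ρ ^ 2) ^ 2)) := by
    rw [hDeq]
    field_simp
    rw [hξ]
    ring
  set K : ℂ := ((1 + σ) / (1 - σ) / (4 * ξ ^ 2) : ℝ) -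
    (((1 - ρ ^ 2 : ℝ) : ℂ) * ((ρ / ξ : ℝ) + Complex.I * u) ^ 2 +
      2 * ((σ - ρ ^ 2 : ℝ) : ℂ) * ((ρ / ξ : ℝ) + Complex.I * u) * ((ρ / ξ : ℝ) + Complex.I * v) +
      ((1 - ρ ^ 2 : ℝ) : ℂ) * ((ρ / ξ : ℝ) + Complex.I * v) ^ 2) /
      (4 * (((1 - ρ ^ 2 : ℝ) : ℂ) ^ 2 - ((σ - ρ ^ 2 : ℝ) : ℂ) ^ 2)) with hK
  set T : ℂ := 1 + (1 - (ρ : ℂ) ^ 2) * u ^ 2 - 2 * Complex.I * ρ * u +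
    (1 - (ρ : ℂ) ^ 2) * v ^ 2 - 2 * Complex.I * ρ * v + 2 * ((σ : ℂ) - (ρ : ℂ) ^ 2) * u * v with hT
  have hKT : 4 * (((1 - ρ ^ 2) ^ 2 - (σ - ρ ^ 2) ^ 2 : ℝ) : ℂ) * K = T := by
    have hDc : (((1 - ρ ^ 2 : ℝ) : ℂ) ^ 2 - ((σ - ρ ^ 2 : ℝ) : ℂ) ^ 2) ≠ 0 := by
      exact_mod_cast hD.ne'
    have hξc : (ξ : ℂ) ≠ 0 := by exact_mod_cast h2.ne'
    have hAc : (((1 + σ) / (1 - σ) / (4 * ξ ^ 2) : ℝ) : ℂ) =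
        (1 + 2 * (ρ : ℂ) ^ 2 / ξ) /
          (4 * (((1 - ρ ^ 2 : ℝ) : ℂ) ^ 2 - ((σ - ρ ^ 2 : ℝ) : ℂ) ^ 2)) := by
      norm_cast
      rw [hDeq]
      field_simp
      rw [hξ]
      ring
    have hsum : ((1 - ρ ^ 2 : ℝ) : ℂ) = ξ - ((σ - ρ ^ 2 : ℝ) : ℂ) := by
      rw [hξ]
      push_cast
      ring
    have hT' : T = 1 + ((1 - ρ ^ 2 : ℝ) : ℂ) * u ^ 2 - 2 * Complex.I * ρ * u +
        ((1 - ρ ^ 2 : ℝ) : ℂ) * v ^ 2 - 2 * Complex.I * ρ * v +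
        2 * ((σ - ρ ^ 2 : ℝ) : ℂ) * u * v := by
      rw [hT]
      push_cast
      ring
    rw [hK, hAc, ← sub_div, Complex.ofReal_sub, Complex.ofReal_pow, Complex.ofReal_pow,
      mul_div_cancel₀ _ (mul_ne_zero (by norm_num) hDc), hT', Complex.ofReal_div, hsum]
    field_simp
    ring_nf
    rw [Complex.I_sq]
    ring
  have hTre : 0 < T.re := by
    have e : T.re = 1 + ((1 - ρ ^ 2) * u ^ 2 - 2 * (σ - ρ ^ 2) * u * (-v) +
        (1 - ρ ^ 2) * (-v) ^ 2) := by
      have : T = ((1 + ((1 - ρ ^ 2) * u ^ 2 - 2 * (σ - ρ ^ 2) * u * (-v) +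
        (1 - ρ ^ 2) * (-v) ^ 2) : ℝ) : ℂ) + ((-2 * ρ * (u + v) : ℝ) : ℂ) * Complex.I := by
        rw [hT]
        push_cast
        ring
      rw [this]
      simp only [Complex.add_re, Complex.ofReal_re, Complex.re_ofReal_mul, Complex.I_re, mul_zero,
        add_zero]
    rw [e]
    by_cases h : (u, -v) = (0, 0)
    · simp only [Prod.mk.injEq] at h
      simp [h.1, h.2]
    · have := quadForm_pos hp hD h
      linarith
  have hKre : 0 < K.re := by
    have e : 4 * ((1 - ρ ^ 2) ^ 2 - (σ - ρ ^ 2) ^ 2) * K.re = T.re := by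
      rw [← hKT, ← Complex.re_ofReal_mul]
      push_cast
      ring_nf
    exact pos_of_mul_pos_right (e ▸ hTre) (by positivity)
  have hmix := integral_gaussian_mixture hp hD hK hKre (by
    simp only [Complex.add_re, Complex.ofReal_re, Complex.I_mul_re, Complex.ofReal_im, neg_zero,
      add_zero]
    rw [hA]
    positivity)
  have hne : ∀ᵐ z : ℝ × ℝ, z ≠ (0, 0) :=
    compl_mem_ae_iff.2 (measure_singleton ((0, 0) : ℝ × ℝ))
  have hae := hne.mono fun z hz =>
    (jointDensity_mul_cexp_eq hη h2 (quadForm_pos hp hD hz) u v).symm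
  refine ⟨(hmix.1.const_mul _).congr hae, (integral_congr_ae hae).symm.trans ?_⟩
  rw [integral_const_mul]
  exact (congrArg _ hmix.2).trans (cpow_half_pi_div hD hTre hKT)
end

section
/- Let ρ, σ ∈ ℝ satisfy 1 − σ² > 0 and 1 − 2ρ² + σ > 0, and set ξ = 1 − 2ρ² + σ, η = (1+σ)/(1−σ), λ = 1/√(1−σ), κ = 1/√(1−2ρ²+σ), δ = 2ρ/ξ, α = √(2η)/ξ. Then for all (x,y) ∈ ℝ² with (x,y) ≠ (0,0), the iterated integral (2λ⁴κ⁴/(2π)²) ∫_ℝ ∫_ℝ exp(−i((x+y)/2)s − i((−x+y)/2)t)·[λ²(s−iδ)² + κ²t² + α²]^{−2} dt ds equals (λ²κ²/(4πα))·exp(δ(x+y)/2)·R·K₁((α/(2λκ))·R), where R = √(κ²(x+y)² + λ²(x−y)²) and K₁(z) = ∫₀^∞ exp(−z cosh t) cosh t dt. -/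
open MeasureTheory

/-- The modified Bessel function of the second kind `K_ν(x)` for real order and argument,
defined by `K_ν(x) = ∫₀^∞ exp(-x cosh t) cosh(ν t) dt`. -/
noncomputable def besselK (ν x : ℝ) : ℝ :=
  ∫ t in Set.Ioi (0 : ℝ), Real.exp (-x * Real.cosh t) * Real.cosh (ν * t)

theorem integral_exp_neg_mul_add_div {m z : ℝ} (hm : 0 < m) (hz : 0 < z) :
    ∫ τ in Set.Ioi (0 : ℝ), Real.exp (-(z / 2 * (τ / m + m / τ))) = 2 * m * besselK 1 z := by
  set f : ℝ → ℝ := fun u ↦ m * Real.exp u with hf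
  set g : ℝ → ℝ := fun τ ↦ Real.exp (-(z / 2 * (τ / m + m / τ))) with hg
  have himage : f '' Set.univ = Set.Ioi 0 := by
    ext τ
    simp only [hf, Set.image_univ, Set.mem_range, Set.mem_Ioi]
    refine ⟨by rintro ⟨u, rfl⟩; positivity, fun h ↦ ⟨Real.log (τ / m), ?_⟩⟩
    rw [Real.exp_log (by positivity)]
    field_simp
  have hderiv : ∀ u ∈ Set.univ, HasDerivWithinAt f (f u) Set.univ u := fun u _ ↦
    ((Real.hasDerivAt_exp u).const_mul m).hasDerivWithinAt
  have hinj : Set.InjOn f Set.univ := fun u _ v _ h ↦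
    Real.exp_injective (mul_left_cancel₀ hm.ne' h)
  have hcomp : ∀ u, |f u| • g (f u) = m * (Real.exp (-z * Real.cosh u) * Real.exp u) := fun u ↦ by
    have hfu : 0 < f u := by positivity
    have hexp : -(z / 2 * (f u / m + m / f u)) = -z * Real.cosh u := by
      simp only [hf, Real.cosh_eq, Real.exp_neg]
      field_simp
    rw [abs_of_pos hfu, smul_eq_mul, hg]
    dsimp only
    rw [hexp]
    ring
  have hgint : IntegrableOn g (Set.Ioi 0) := by
    have hlin : IntegrableOn (fun τ ↦ Real.exp (-(z / (2 * m)) * τ)) (Set.Ioi 0) :=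
      integrableOn_exp_mul_Ioi (by rw [neg_lt_zero]; positivity) 0
    refine Integrable.mono' hlin (by fun_prop) ?_
    filter_upwards [ae_restrict_mem measurableSet_Ioi] with τ hτ
    have hτ : 0 < τ := hτ
    rw [Real.norm_of_nonneg (Real.exp_pos _).le]
    refine Real.exp_le_exp.2 ?_
    have h1 : 0 ≤ z / 2 * (m / τ) := by positivity
    have h2 : z / 2 * (τ / m + m / τ) = z / (2 * m) * τ + z / 2 * (m / τ) := by
      field_simp
    linarith
  have hint : Integrable fun u : ℝ ↦ Real.exp (-z * Real.cosh u) * Real.exp u := by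
    rw [← himage, integrableOn_image_iff_integrableOn_abs_deriv_smul MeasurableSet.univ hderiv hinj,
      integrableOn_univ] at hgint
    simp_rw [hcomp] at hgint
    exact (integrable_const_mul_iff (IsUnit.mk0 m hm.ne') _).1 hgint
  have hint' : Integrable fun u : ℝ ↦ Real.exp (-z * Real.cosh u) * Real.exp (-u) := by
    simpa using hint.comp_neg
  have hneg : ∫ u : ℝ, Real.exp (-z * Real.cosh u) * Real.exp (-u) =
      ∫ u : ℝ, Real.exp (-z * Real.cosh u) * Real.exp u := by
    simpa using integral_neg_eq_self (fun u : ℝ ↦ Real.exp (-z * Real.cosh u) * Real.exp u) volume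
  have hcosh : 2 * ∫ u : ℝ, Real.exp (-z * Real.cosh u) * Real.cosh u =
      2 * ∫ u : ℝ, Real.exp (-z * Real.cosh u) * Real.exp u := by
    rw [two_mul (∫ u : ℝ, Real.exp (-z * Real.cosh u) * Real.exp u)]
    nth_rw 2 [← hneg]
    rw [← integral_add hint hint', ← integral_const_mul]
    congr with u
    rw [Real.cosh_eq u]
    ring
  have habs := integral_comp_abs (f := fun u ↦ Real.exp (-z * Real.cosh u) * Real.cosh u)
  simp only [Real.cosh_abs] at habs
  rw [← himage, integral_image_eq_integral_abs_deriv_smul MeasurableSet.univ hderiv hinj g,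
    setIntegral_univ]
  simp_rw [hcomp]
  rw [integral_const_mul, besselK]
  simp only [one_mul]
  rw [habs] at hcosh
  linear_combination -m / 2 * hcosh

theorem integrable_rpow_mul_exp_neg_mul_sq_add {p k A : ℝ} (hp : -1 / 2 < p) (hk : 0 < k)
    (hA : 0 < A) :
    Integrable (fun q : ℝ × ℝ ↦ q.2 ^ p * Real.exp (-(q.2 * (k * q.1 ^ 2 + A))))
      (volume.prod (volume.restrict (Set.Ioi 0))) := by
  have hsplit : ∀ t τ : ℝ, τ ^ p * Real.exp (-(τ * (k * t ^ 2 + A))) =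
      τ ^ p * Real.exp (-A * τ) * Real.exp (-(τ * k) * t ^ 2) := fun t τ ↦ by
    rw [mul_assoc, ← Real.exp_add]
    ring_nf
  rw [integrable_prod_iff' (by fun_prop)]
  constructor
  · filter_upwards [ae_restrict_mem measurableSet_Ioi] with τ hτ
    have hτ : 0 < τ := hτ
    simp_rw [hsplit]
    exact (integrable_exp_neg_mul_sq (by positivity)).const_mul _
  · have hmajor := (integrableOn_rpow_mul_exp_neg_mul_rpow (s := p - 1 / 2) (p := 1) (b := A)
      (by linarith) one_pos hA).const_mul √(Real.pi / k)
    refine IntegrableOn.congr_fun hmajor (fun τ hτ ↦ ?_) measurableSet_Ioi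
    have hτ : 0 < τ := hτ
    have hnorm : ∀ t : ℝ, ‖τ ^ p * Real.exp (-(τ * (k * t ^ 2 + A)))‖ =
        τ ^ p * Real.exp (-A * τ) * Real.exp (-(τ * k) * t ^ 2) := fun t ↦ by
      rw [Real.norm_of_nonneg (by positivity), hsplit]
    simp_rw [hnorm]
    rw [integral_const_mul, integral_gaussian, Real.rpow_one, Real.rpow_sub hτ,
      ← Real.sqrt_eq_rpow, mul_comm τ k, ← div_div, Real.sqrt_div (by positivity) τ]
    ring

theorem integral_mul_cexp_neg_mul_Ioi {w : ℂ} (hw : 0 < w.re) :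
    ∫ τ in Set.Ioi (0 : ℝ), (τ : ℂ) * Complex.exp (-(τ * w)) = (w ^ 2)⁻¹ := by
  have hw0 : w ≠ 0 := fun h ↦ by simp [h] at hw
  have hnorm : ∀ τ : ℝ, ‖Complex.exp (-(τ * w))‖ = Real.exp (-w.re * τ) := fun τ ↦ by
    rw [Complex.norm_exp]
    simp [mul_comm]
  have hderiv : ∀ τ ∈ Set.Ici (0 : ℝ), HasDerivAt
      (fun τ : ℝ ↦ -((τ : ℂ) * w + 1) * Complex.exp (-(τ * w)) / w ^ 2)
      ((τ : ℂ) * Complex.exp (-(τ * w))) τ := fun τ _ ↦ by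
    have hid : HasDerivAt (fun τ : ℝ ↦ (τ : ℂ) * w) w τ := by
      simpa using (Complex.ofRealCLM.hasDerivAt (x := τ)).mul_const w
    refine (((hid.add_const 1).fun_neg.fun_mul hid.fun_neg.cexp).div_const (w ^ 2)).congr_deriv ?_
    simp only [neg_mul, mul_neg]
    field_simp
    ring
  have hint : IntegrableOn (fun τ : ℝ ↦ (τ : ℂ) * Complex.exp (-(τ * w))) (Set.Ioi 0) := by
    have hmajor := integrableOn_rpow_mul_exp_neg_mul_rpow (s := 1) (p := 1) (b := w.re)
      (by norm_num) one_pos hw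
    refine Integrable.mono' hmajor (by fun_prop) ?_
    filter_upwards [ae_restrict_mem measurableSet_Ioi] with τ hτ
    rw [norm_mul, hnorm, Complex.norm_real, Real.norm_of_nonneg (le_of_lt hτ), Real.rpow_one]
  have hlim : Filter.Tendsto (fun τ : ℝ ↦ -((τ : ℂ) * w + 1) * Complex.exp (-(τ * w)) / w ^ 2)
      Filter.atTop (nhds 0) := by
    have hpow : ∀ n : ℕ, Filter.Tendsto (fun τ : ℝ ↦ (τ : ℂ) ^ n * Complex.exp (-(τ * w)))
        Filter.atTop (nhds 0) := fun n ↦ by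
      rw [tendsto_zero_iff_norm_tendsto_zero]
      refine (tendsto_rpow_mul_exp_neg_mul_atTop_nhds_zero n w.re hw).congr' ?_
      filter_upwards [Filter.eventually_ge_atTop 0] with τ hτ
      rw [norm_mul, hnorm, norm_pow, Complex.norm_real, Real.norm_of_nonneg hτ, Real.rpow_natCast]
    convert! ((((hpow 1).const_mul w).add (hpow 0)).neg).div_const (w ^ 2) using 2
    · ring
    · simp
  rw [integral_Ioi_of_hasDerivAt_of_tendsto' hderiv hint hlim]
  simp [neg_div]

theorem integral_cexp_neg_mul_sq_add {p : ℝ} (hp : 0 < p) (c d : ℂ) :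
    ∫ x : ℝ, Complex.exp (-(p : ℂ) * x ^ 2 + c * x + d) =
      (√(Real.pi / p) : ℝ) * Complex.exp (d + c ^ 2 / (4 * p)) := by
  rw [integral_cexp_quadratic (by simpa using hp), neg_neg, Real.sqrt_eq_rpow,
    Complex.ofReal_cpow (by positivity)]
  push_cast
  congr 2
  rw [mul_neg, div_neg, sub_neg_eq_add]

theorem integral_integral_cexp_mul_inv_sq {L K A δ : ℝ} (hL : 0 < L) (hK : 0 < K)
    (hA : L * δ ^ 2 < A) (a b : ℝ) :
    ∫ s : ℝ, ∫ t : ℝ, Complex.exp (-Complex.I * a * s - Complex.I * b * t) *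
        (((L : ℂ) * ((s : ℂ) - Complex.I * δ) ^ 2 + K * t ^ 2 + A) ^ 2)⁻¹ =
      ((Real.pi / √(L * K) * Real.exp (δ * a) *
        ∫ τ in Set.Ioi (0 : ℝ),
          Real.exp (-(A * τ + (a ^ 2 / L + b ^ 2 / K) / (4 * τ))) : ℝ) : ℂ) := by
  set G : ℝ → ℝ → ℝ → ℂ := fun s t τ ↦ τ * Complex.exp (-Complex.I * a * s - Complex.I * b * t -
    τ * ((L : ℂ) * ((s : ℂ) - Complex.I * δ) ^ 2 + K * t ^ 2 + A)) with hG
  set H : ℝ → ℝ → ℂ := fun s τ ↦ ((√(Real.pi / K) * τ ^ (1 / 2 : ℝ) : ℝ) : ℂ) *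
    Complex.exp (-Complex.I * a * s - τ * ((L : ℂ) * ((s : ℂ) - Complex.I * δ) ^ 2 + A) -
      (b ^ 2 / (4 * (τ * K)) : ℝ)) with hH
  have hlaplace : ∀ s t : ℝ, Complex.exp (-Complex.I * a * s - Complex.I * b * t) *
      (((L : ℂ) * ((s : ℂ) - Complex.I * δ) ^ 2 + K * t ^ 2 + A) ^ 2)⁻¹ =
        ∫ τ in Set.Ioi (0 : ℝ), G s t τ := fun s t ↦ by
    have hre : 0 < ((L : ℂ) * ((s : ℂ) - Complex.I * δ) ^ 2 + K * t ^ 2 + A).re := by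
      have : ((L : ℂ) * ((s : ℂ) - Complex.I * δ) ^ 2 + K * t ^ 2 + A).re =
          L * s ^ 2 + K * t ^ 2 + (A - L * δ ^ 2) := by
        simp [pow_two]
        ring
      rw [this]
      have : 0 < A - L * δ ^ 2 := sub_pos.2 hA
      positivity
    rw [← integral_mul_cexp_neg_mul_Ioi hre, ← integral_const_mul]
    congr with τ
    simp only [hG]
    rw [sub_eq_add_neg (_ - _), Complex.exp_add]
    ring
  have hGnorm : ∀ s t τ : ℝ, 0 < τ → ‖G s t τ‖ =
      τ ^ (1 : ℝ) * Real.exp (-(τ * (K * t ^ 2 + (L * s ^ 2 + (A - L * δ ^ 2))))) := fun s t τ hτ ↦ by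
    simp only [hG]
    rw [norm_mul, Complex.norm_real, Real.norm_of_nonneg hτ.le, Complex.norm_exp, Real.rpow_one]
    congr 2
    simp [pow_two, -mul_eq_mul_left_iff]
    ring
  have hmem : ∀ᵐ q : ℝ × ℝ ∂(volume.prod (volume.restrict (Set.Ioi 0))), 0 < q.2 :=
    Measure.quasiMeasurePreserving_snd.ae (ae_restrict_mem measurableSet_Ioi)
  have hGint : ∀ s : ℝ, Integrable (Function.uncurry (G s))
      (volume.prod (volume.restrict (Set.Ioi 0))) := fun s ↦ by
    have hpos : 0 < L * s ^ 2 + (A - L * δ ^ 2) := by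
      have : 0 < A - L * δ ^ 2 := sub_pos.2 hA
      positivity
    refine Integrable.mono' (integrable_rpow_mul_exp_neg_mul_sq_add (p := 1) (by norm_num) hK hpos)
      (by fun_prop) ?_
    filter_upwards [hmem] with q hq
    exact (hGnorm s q.1 q.2 hq).le
  have hGH : ∀ s τ : ℝ, 0 < τ → ∫ t : ℝ, G s t τ = H s τ := fun s τ hτ ↦ by
    simp only [hG, hH]
    rw [integral_const_mul]
    have h := integral_cexp_neg_mul_sq_add (mul_pos hτ hK) (-Complex.I * b)
      (-Complex.I * a * s - τ * ((L : ℂ) * ((s : ℂ) - Complex.I * δ) ^ 2 + A))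
    have hsqrt : √(Real.pi / K) * τ ^ (1 / 2 : ℝ) = τ * √(Real.pi / (τ * K)) := by
      rw [← Real.sqrt_eq_rpow, mul_comm τ K, ← div_div, Real.sqrt_div (by positivity) τ]
      field_simp
      rw [Real.sq_sqrt hτ.le]
    rw [hsqrt, Complex.ofReal_mul, mul_assoc (τ : ℂ)]
    congr 1
    convert! h using 2
    · ext t
      congr 1
      push_cast
      ring
    · congr 1
      rw [mul_pow, neg_sq, Complex.I_sq]
      push_cast
      ring
  have hHint : Integrable (Function.uncurry H) (volume.prod (volume.restrict (Set.Ioi 0))) := by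
    refine Integrable.mono' ((integrable_rpow_mul_exp_neg_mul_sq_add (p := 1 / 2) (by norm_num) hL
      (sub_pos.2 hA)).const_mul √(Real.pi / K)) (by fun_prop) ?_
    filter_upwards [hmem] with q hq
    simp only [Function.uncurry, hH]
    rw [norm_mul, Complex.norm_real, Real.norm_of_nonneg (by positivity), Complex.norm_exp,
      ← mul_assoc √(Real.pi / K)]
    refine mul_le_mul_of_nonneg_left (Real.exp_le_exp.2 ?_) (by positivity)
    have hb : 0 ≤ b ^ 2 / (4 * (q.2 * K)) := by positivity
    rw [Complex.sub_re, Complex.ofReal_re]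
    refine (sub_le_self _ hb).trans_eq ?_
    simp [pow_two, -mul_eq_mul_left_iff]
    ring
  have hHs : ∀ τ : ℝ, 0 < τ → ∫ s : ℝ, H s τ = ((Real.pi / √(L * K) * Real.exp (δ * a) *
      Real.exp (-(A * τ + (a ^ 2 / L + b ^ 2 / K) / (4 * τ))) : ℝ) : ℂ) := fun τ hτ ↦ by
    simp only [hH]
    rw [integral_const_mul]
    have h := integral_cexp_neg_mul_sq_add (mul_pos hτ hL)
      (2 * Complex.I * δ * τ * L - Complex.I * a)
      (τ * L * δ ^ 2 - τ * A - (b ^ 2 / (4 * (τ * K)) : ℝ))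
    have hsqrt : √(Real.pi / K) * τ ^ (1 / 2 : ℝ) * √(Real.pi / (τ * L)) =
        Real.pi / √(L * K) := by
      rw [← Real.sqrt_eq_rpow, ← Real.sqrt_mul (by positivity), ← Real.sqrt_mul (by positivity)]
      have : Real.pi / K * τ * (Real.pi / (τ * L)) = Real.pi ^ 2 / (L * K) := by
        field_simp
      rw [this, Real.sqrt_div (by positivity), Real.sqrt_sq Real.pi_pos.le]
    rw [mul_assoc (Real.pi / _), ← Real.exp_add, ← hsqrt, Complex.ofReal_mul _ (Real.exp _),
      Complex.ofReal_mul _ √(Real.pi / (τ * L)), mul_assoc]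
    congr 1
    convert! h using 2
    · ext s
      congr 1
      push_cast
      ring_nf
      rw [Complex.I_sq]
      ring
    · rw [Complex.ofReal_exp]
      congr 1
      have hsq : (2 * Complex.I * δ * τ * L - Complex.I * a) ^ 2 =
          -(2 * (δ : ℂ) * τ * L - a) ^ 2 := by
        linear_combination (2 * (δ : ℂ) * τ * L - a) ^ 2 * Complex.I_sq
      have hτ' : (τ : ℂ) ≠ 0 := by exact_mod_cast hτ.ne'
      have hL' : (L : ℂ) ≠ 0 := by exact_mod_cast hL.ne'
      have hK' : (K : ℂ) ≠ 0 := by exact_mod_cast hK.ne'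
      rw [hsq]
      push_cast
      field_simp
      ring
  calc
    _ = ∫ s : ℝ, ∫ τ in Set.Ioi (0 : ℝ), H s τ := by
      congr with s
      simp_rw [hlaplace]
      rw [integral_integral_swap (hGint s)]
      exact setIntegral_congr_fun measurableSet_Ioi fun τ hτ ↦ hGH s τ hτ
    _ = ∫ τ in Set.Ioi (0 : ℝ), ∫ s : ℝ, H s τ := integral_integral_swap hHint
    _ = _ := by
      rw [← integral_const_mul, ← integral_complex_ofReal]
      exact setIntegral_congr_fun measurableSet_Ioi hHs

theorem joint_density_n_four (ρ σ : ℝ) (h1 : 1 - σ ^ 2 > 0) (h2 : 1 - 2 * ρ ^ 2 + σ > 0)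
    (ξ η lam kap δ α : ℝ) (hξ : ξ = 1 - 2 * ρ ^ 2 + σ) (hη : η = (1 + σ) / (1 - σ))
    (hlam : lam = 1 / Real.sqrt (1 - σ)) (hkap : kap = 1 / Real.sqrt (1 - 2 * ρ ^ 2 + σ))
    (hδ : δ = 2 * ρ / ξ) (hα : α = Real.sqrt (2 * η) / ξ) :
    ∀ x y : ℝ, (x, y) ≠ (0, 0) →
      ((2 * lam ^ 4 * kap ^ 4 / (2 * Real.pi) ^ 2 : ℝ) : ℂ) *
        (∫ s : ℝ, ∫ t : ℝ,
          Complex.exp (-Complex.I * (((x : ℂ) + y) / 2) * s -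
              Complex.I * ((-(x : ℂ) + y) / 2) * t) *
            (((lam : ℂ) ^ 2 * ((s : ℂ) - Complex.I * δ) ^ 2 + (kap : ℂ) ^ 2 * (t : ℂ) ^ 2 +
              (α : ℂ) ^ 2) ^ 2)⁻¹) =
      ((lam ^ 2 * kap ^ 2 / (4 * Real.pi * α) * Real.exp (δ * (x + y) / 2) *
          Real.sqrt (kap ^ 2 * (x + y) ^ 2 + lam ^ 2 * (x - y) ^ 2) *
          besselK 1 (α / (2 * lam * kap) *
            Real.sqrt (kap ^ 2 * (x + y) ^ 2 + lam ^ 2 * (x - y) ^ 2)) : ℝ) : ℂ) := by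
  intro x y hxy
  have hσ : 0 < 1 - σ := by nlinarith [sq_nonneg (1 + σ), sq_nonneg (1 - σ)]
  have hσ' : 0 < 1 + σ := by nlinarith [sq_nonneg (1 + σ), sq_nonneg (1 - σ)]
  have hξ0 : 0 < ξ := hξ ▸ h2
  have hη0 : 0 < η := by rw [hη]; positivity
  have hlam0 : 0 < lam := by rw [hlam]; positivity
  have hkap0 : 0 < kap := by rw [hkap]; positivity
  have hα0 : 0 < α := by rw [hα]; positivity
  have hlt : lam ^ 2 * δ ^ 2 < α ^ 2 := by
    rw [hlam, hδ, hα, div_pow, div_pow, div_pow, Real.sq_sqrt hσ.le, Real.sq_sqrt (by positivity),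
      hη, one_pow, div_mul_div_comm, one_mul, ← mul_div_assoc, div_div]
    gcongr
    linarith
  set r : ℝ := √(kap ^ 2 * (x + y) ^ 2 + lam ^ 2 * (x - y) ^ 2)
  have hr0 : 0 < r := by
    refine Real.sqrt_pos.2 ((by positivity : (0 : ℝ) ≤ _).lt_of_ne' fun h ↦ hxy ?_)
    have hadd : 0 ≤ kap ^ 2 * (x + y) ^ 2 := by positivity
    have hsub : 0 ≤ lam ^ 2 * (x - y) ^ 2 := by positivity
    have hadd0 : kap ^ 2 * (x + y) ^ 2 = 0 := by linarith
    have hsub0 : lam ^ 2 * (x - y) ^ 2 = 0 := by linarith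
    have hxy1 : x + y = 0 := by simpa [hkap0.ne'] using hadd0
    have hxy2 : x - y = 0 := by simpa [hlam0.ne'] using hsub0
    ext <;> simp <;> linarith
  have hr2 : r ^ 2 = kap ^ 2 * (x + y) ^ 2 + lam ^ 2 * (x - y) ^ 2 := Real.sq_sqrt (by positivity)
  have hmain := integral_integral_cexp_mul_inv_sq (L := lam ^ 2) (K := kap ^ 2) (by positivity)
    (by positivity) hlt ((x + y) / 2) ((-x + y) / 2)
  have hbessel := integral_exp_neg_mul_add_div (m := r / (4 * lam * kap * α))
    (z := α / (2 * lam * kap) * r) (by positivity) (by positivity)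
  have hexponent : ∀ τ ∈ Set.Ioi (0 : ℝ),
      Real.exp (-(α ^ 2 * τ + (((x + y) / 2) ^ 2 / lam ^ 2 + ((-x + y) / 2) ^ 2 / kap ^ 2) /
        (4 * τ))) = Real.exp (-(α / (2 * lam * kap) * r / 2 *
          (τ / (r / (4 * lam * kap * α)) + r / (4 * lam * kap * α) / τ))) := fun τ hτ ↦ by
    have hτ : 0 < τ := hτ
    congr 2
    field_simp
    rw [hr2]
    ring
  rw [setIntegral_congr_fun measurableSet_Ioi hexponent, hbessel, ← mul_pow,
    Real.sqrt_sq (by positivity)] at hmain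
  have hcast := congrArg (fun v : ℂ ↦
    ((2 * lam ^ 4 * kap ^ 4 / (2 * Real.pi) ^ 2 : ℝ) : ℂ) * v) hmain
  rw [← Complex.ofReal_mul] at hcast
  convert! hcast using 2
  · simp only [Complex.ofReal_pow, Complex.ofReal_div, Complex.ofReal_add, Complex.ofReal_neg,
      Complex.ofReal_ofNat]
  · rw [mul_div_assoc δ]
    field_simp
end

section
/- Let γ > 0, λ > 0, α > 0, δ ∈ ℝ with α > λ|δ|, and c ∈ ℝ. Then ∫_ℝ K₀(γ·√(λ²(s−iδ)² + α²))·exp(−ics) ds = π·exp(cδ)·exp(−(α/λ)·√(γ²λ² + c²))/√(γ²λ² + c²), where the inner complex square root is the principal branch (its argument has positive real part since α² > λ²δ²), and K₀(z) = ∫₀^∞ exp(−z cosh t) dt for Re z > 0. -/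
open MeasureTheory

/-- The modified Bessel function of the second kind `K₀(z)` for complex argument with
positive real part, defined by `K₀(z) = ∫₀^∞ exp(-z cosh t) dt`. -/
noncomputable def besselK0 (z : ℂ) : ℂ :=
  ∫ t in Set.Ioi (0 : ℝ), Complex.exp (-z * Real.cosh t)

section

open Filter Topology Set ProbabilityTheory

lemma sq_div_two_le_exp_add_exp_neg (t : ℝ) : t ^ 2 / 2 ≤ Real.exp t + Real.exp (-t) := by
  rcases le_total 0 t with h | h
  · nlinarith [Real.quadratic_le_exp_of_nonneg h, Real.exp_pos (-t)]
  · nlinarith [Real.quadratic_le_exp_of_nonneg (neg_nonneg.2 h), Real.exp_pos t]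

lemma integrable_exp_mul_sub_exp_sub_exp_neg {A B : ℝ} (hA : 0 < A) (hB : 0 < B) (p : ℝ) :
    Integrable fun t : ℝ ↦ Real.exp (p * t - A * Real.exp t - B * Real.exp (-t)) := by
  obtain ⟨m, hm, hmA, hmB⟩ : ∃ m > 0, m ≤ A ∧ m ≤ B :=
    ⟨min A B, lt_min hA hB, min_le_left _ _, min_le_right _ _⟩
  refine ((integrable_exp_neg_mul_sq (b := m / 4) (by positivity)).const_mul
    (Real.exp (p ^ 2 / m))).mono' (by fun_prop) (ae_of_all _ fun t ↦ ?_)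
  rw [Real.norm_eq_abs, Real.abs_exp, ← Real.exp_add, Real.exp_le_exp]
  have h1 : m * Real.exp t ≤ A * Real.exp t := by gcongr
  have h2 : m * Real.exp (-t) ≤ B * Real.exp (-t) := by gcongr
  have h3 : m * (t ^ 2 / 2) ≤ m * (Real.exp t + Real.exp (-t)) := by
    gcongr
    exact sq_div_two_le_exp_add_exp_neg t
  have h4 : p * t ≤ p ^ 2 / m + m / 4 * t ^ 2 := by
    have : p ^ 2 / m + m / 4 * t ^ 2 - p * t = (p - m * t / 2) ^ 2 / m := by
      field_simp
      ring
    linarith [show 0 ≤ (p - m * t / 2) ^ 2 / m by positivity]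
  linarith

lemma sq_mul_exp_half_sub_mul_exp_neg_half (a b t : ℝ) :
    (a * Real.exp (t / 2) - b * Real.exp (-t / 2)) ^ 2 =
      a ^ 2 * Real.exp t + b ^ 2 * Real.exp (-t) - 2 * a * b := by
  have h1 : Real.exp t = Real.exp (t / 2) ^ 2 := by
    rw [← Real.exp_nat_mul]; congr 1; push_cast; ring
  have h2 : Real.exp (-t) = Real.exp (-t / 2) ^ 2 := by
    rw [← Real.exp_nat_mul]; congr 1; push_cast; ring
  have h3 : Real.exp (t / 2) * Real.exp (-t / 2) = 1 := by
    rw [← Real.exp_add, ← Real.exp_zero]; congr 1; ring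
  rw [h1, h2]
  linear_combination (-2 * a * b) * h3

lemma integral_exp_neg_half_mul_exp_neg_sq {a b : ℝ} (ha : 0 < a) (hb : 0 < b) :
    ∫ t : ℝ, Real.exp (-t / 2) *
      Real.exp (-(a * Real.exp (t / 2) - b * Real.exp (-t / 2)) ^ 2) = √Real.pi / b := by
  set φ : ℝ → ℝ := fun t ↦ a * Real.exp (t / 2) - b * Real.exp (-t / 2) with hφ
  set φ' : ℝ → ℝ := fun t ↦ (a * Real.exp (t / 2) + b * Real.exp (-t / 2)) / 2 with hφ'
  have hsq (t : ℝ) : φ t ^ 2 = a ^ 2 * Real.exp t + b ^ 2 * Real.exp (-t) - 2 * a * b :=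
    sq_mul_exp_half_sub_mul_exp_neg_half a b t
  have hderiv (t : ℝ) : HasDerivAt φ (φ' t) t := by
    have h1 : HasDerivAt (fun t : ℝ ↦ Real.exp (t / 2)) (Real.exp (t / 2) * (1 / 2)) t :=
      ((hasDerivAt_id t).div_const 2).exp
    have h2 : HasDerivAt (fun t : ℝ ↦ Real.exp (-t / 2)) (Real.exp (-t / 2) * (-1 / 2)) t :=
      ((hasDerivAt_id t).neg.div_const 2).exp
    convert! (h1.const_mul a).sub (h2.const_mul b) using 1
    simp only [hφ']
    ring
  have hpos (t : ℝ) : 0 < φ' t := by positivity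
  have hmono : StrictMono φ := strictMono_of_hasDerivAt_pos hderiv hpos
  have hcont : Continuous φ := by fun_prop
  have hhalf : Tendsto (fun t : ℝ ↦ t / 2) atTop atTop := tendsto_id.atTop_div_const two_pos
  have hhalf' : Tendsto (fun t : ℝ ↦ t / 2) atBot atBot := tendsto_id.atBot_div_const two_pos
  have hneg : (fun t : ℝ ↦ -t / 2) = fun t ↦ -(t / 2) := by ext; ring
  have htop : Tendsto φ atTop atTop := by
    simp only [hφ, sub_eq_add_neg]
    refine ((Real.tendsto_exp_atTop.comp hhalf).const_mul_atTop ha).atTop_add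
      (C := -(b * 0)) (((Real.tendsto_exp_atBot.comp ?_).const_mul b).neg)
    rw [hneg]
    exact tendsto_neg_atTop_atBot.comp hhalf
  have hbot : Tendsto φ atBot atBot := by
    simp only [hφ, sub_eq_add_neg]
    refine Tendsto.add_atBot (C := a * 0) ((Real.tendsto_exp_atBot.comp hhalf').const_mul a)
      (tendsto_neg_atTop_atBot.comp ((Real.tendsto_exp_atTop.comp ?_).const_mul_atTop hb))
    rw [hneg]
    exact tendsto_neg_atBot_atTop.comp hhalf'
  have hsurj : φ.Surjective := hcont.surjective htop hbot
  have hgauss : ∫ t, φ' t * Real.exp (-φ t ^ 2) = √Real.pi := by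
    have h := integral_image_eq_integral_abs_deriv_smul MeasurableSet.univ
      (fun t _ ↦ (hderiv t).hasDerivWithinAt) hmono.injective.injOn
      (fun u ↦ Real.exp (-1 * u ^ 2))
    rw [image_univ, hsurj.range_eq] at h
    simp only [Measure.restrict_univ, integral_gaussian, div_one] at h
    rw [h]
    exact integral_congr_ae (ae_of_all _ fun t ↦ by simp [abs_of_pos (hpos t)])
  have hint (q : ℝ) : Integrable fun t : ℝ ↦ Real.exp (q * t) * Real.exp (-φ t ^ 2) := by
    refine ((integrable_exp_mul_sub_exp_sub_exp_neg (sq_pos_of_pos ha) (sq_pos_of_pos hb)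
      q).const_mul (Real.exp (2 * a * b))).congr (ae_of_all _ fun t ↦ ?_)
    simp only [hsq, ← Real.exp_add]
    congr 1
    ring
  have h₁ : Integrable fun t : ℝ ↦ Real.exp (t / 2) * Real.exp (-φ t ^ 2) := by
    simpa [div_eq_inv_mul] using hint 2⁻¹
  have h₂ : Integrable fun t : ℝ ↦ Real.exp (-t / 2) * Real.exp (-φ t ^ 2) := by
    simpa [div_eq_inv_mul] using hint (-2⁻¹)
  have hrefl : a * ∫ t, Real.exp (t / 2) * Real.exp (-φ t ^ 2) =
      b * ∫ t, Real.exp (-t / 2) * Real.exp (-φ t ^ 2) := by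
    rw [← integral_sub_left_eq_self _ _ (2 * Real.log (b / a)), ← integral_const_mul,
      ← integral_const_mul]
    refine integral_congr_ae (ae_of_all _ fun t ↦ ?_)
    have e1 : a * Real.exp ((2 * Real.log (b / a) - t) / 2) = b * Real.exp (-t / 2) := by
      rw [show (2 * Real.log (b / a) - t) / 2 = Real.log (b / a) + -t / 2 by ring, Real.exp_add,
        Real.exp_log (by positivity)]
      field_simp
    have e2 : b * Real.exp (-(2 * Real.log (b / a) - t) / 2) = a * Real.exp (t / 2) := by
      rw [show -(2 * Real.log (b / a) - t) / 2 = -Real.log (b / a) + t / 2 by ring, Real.exp_add,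
        Real.exp_neg, Real.exp_log (by positivity)]
      field_simp
    have e3 : φ (2 * Real.log (b / a) - t) = -φ t := by
      simp only [hφ, e1, e2]
      ring
    simp only [e3, neg_sq]
    rw [← mul_assoc, e1, mul_assoc]
  have hsplit : ∫ t, φ' t * Real.exp (-φ t ^ 2) =
      (a * (∫ t, Real.exp (t / 2) * Real.exp (-φ t ^ 2)) +
        b * ∫ t, Real.exp (-t / 2) * Real.exp (-φ t ^ 2)) / 2 := by
    rw [← integral_const_mul, ← integral_const_mul,
      ← integral_add (h₁.const_mul a) (h₂.const_mul b), ← integral_div]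
    refine integral_congr_ae (ae_of_all _ fun t ↦ ?_)
    simp only [hφ']
    ring
  rw [eq_div_iff hb.ne']
  linarith

lemma integral_exp_neg_half_sub_exp_sub_exp_neg {A B : ℝ} (hA : 0 < A) (hB : 0 < B) :
    ∫ t : ℝ, Real.exp (-t / 2 - A * Real.exp t - B * Real.exp (-t)) =
      √(Real.pi / B) * Real.exp (-2 * √(A * B)) := by
  rw [Real.sqrt_div Real.pi_pos.le, ← integral_exp_neg_half_mul_exp_neg_sq (Real.sqrt_pos.2 hA)
    (Real.sqrt_pos.2 hB), ← integral_mul_const]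
  refine integral_congr_ae (ae_of_all _ fun t ↦ ?_)
  simp only [← Real.exp_add]
  congr 1
  rw [sq_mul_exp_half_sub_mul_exp_neg_half, Real.sq_sqrt hA.le, Real.sq_sqrt hB.le,
    Real.sqrt_mul hA.le]
  ring

lemma Complex.re_cpow_half_pos {w : ℂ} (hw : 0 < w.re) : 0 < (w ^ ((1 : ℂ) / 2)).re := by
  have hw0 : w ≠ 0 := by
    rintro rfl
    simp at hw
  have harg := abs_lt.1 (Complex.abs_arg_lt_pi_div_two_iff.2 (Or.inl hw))
  have him : (Complex.log w * (1 / 2)).im = Complex.arg w / 2 := by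
    rw [show (1 / 2 : ℂ) = ((1 / 2 : ℝ) : ℂ) by push_cast; rfl, Complex.im_mul_ofReal,
      Complex.log_im]
    ring
  rw [Complex.cpow_def_of_ne_zero hw0, Complex.exp_re, him]
  exact mul_pos (Real.exp_pos _)
    (Real.cos_pos_of_mem_Ioo ⟨by linarith [Real.pi_pos], by linarith [Real.pi_pos]⟩)

lemma Complex.ofReal_cpow_half {x : ℝ} (hx : 0 ≤ x) : (x : ℂ) ^ ((1 : ℂ) / 2) = (√x : ℝ) := by
  rw [Real.sqrt_eq_rpow, Complex.ofReal_cpow hx]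
  norm_num

lemma integrable_exp_neg_mul_cosh {p : ℝ} (hp : p < 0) :
    Integrable fun t : ℝ ↦ Real.exp (p * Real.cosh t) := by
  refine (integrable_exp_mul_sub_exp_sub_exp_neg (A := -p / 2) (B := -p / 2) (by linarith)
    (by linarith) 0).congr (ae_of_all _ fun t ↦ ?_)
  simp only [Real.cosh_eq]
  congr 1
  ring

lemma analyticAt_besselK0 {z : ℂ} (hz : 0 < z.re) : AnalyticAt ℂ besselK0 z := by
  have hsub : Iio 0 ⊆ interior (integrableExpSet Real.cosh (volume.restrict (Ioi (0 : ℝ)))) :=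
    interior_maximal (fun p hp ↦ (integrable_exp_neg_mul_cosh hp).integrableOn) isOpen_Iio
  have h : AnalyticAt ℂ (complexMGF Real.cosh (volume.restrict (Ioi (0 : ℝ)))) (-z) :=
    analyticAt_complexMGF (hsub (by simpa using hz))
  exact h.comp_of_eq analyticAt_id.neg rfl

lemma analyticAt_integral_cexp_exp_add_exp_neg {b : ℝ} (hb : 0 < b) {w : ℂ} (hw : 0 < w.re) :
    AnalyticAt ℂ (fun w : ℂ ↦ ∫ t : ℝ,
      Complex.exp (-(w * (Real.exp t : ℝ)) - (b * Real.exp (-t) : ℝ))) w := by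
  set ρ : ℝ → NNReal := fun t ↦ (Real.exp (-(b * Real.exp (-t)))).toNNReal with hρ
  have hρm : Measurable ρ := by fun_prop
  have hρv (t : ℝ) : (ρ t : ℝ) = Real.exp (-(b * Real.exp (-t))) :=
    Real.coe_toNNReal _ (Real.exp_pos _).le
  set μ : Measure ℝ := volume.withDensity fun t ↦ ρ t
  have hsub : Iio 0 ⊆ interior (integrableExpSet Real.exp μ) := by
    refine interior_maximal (fun p hp ↦ ?_) isOpen_Iio
    refine (integrable_withDensity_iff_integrable_coe_smul hρm).2 ?_
    refine (integrable_exp_mul_sub_exp_sub_exp_neg (neg_pos.2 hp) hb 0).congr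
      (ae_of_all _ fun t ↦ ?_)
    simp only [hρv, smul_eq_mul, ← Real.exp_add]
    congr 1
    ring
  have h : AnalyticAt ℂ (complexMGF Real.exp μ) (-w) :=
    analyticAt_complexMGF (hsub (by simpa using hw))
  have heq : (fun w : ℂ ↦ ∫ t : ℝ,
      Complex.exp (-(w * (Real.exp t : ℝ)) - (b * Real.exp (-t) : ℝ))) =
      fun w ↦ complexMGF Real.exp μ (-w) := by
    ext w
    rw [complexMGF, integral_withDensity_eq_integral_smul hρm]
    refine integral_congr_ae (ae_of_all _ fun t ↦ ?_)
    simp only [NNReal.smul_def, hρv, Complex.real_smul, Complex.ofReal_exp (-(b * _)),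
      ← Complex.exp_add]
    congr 1
    push_cast
    ring
  rw [heq]
  exact h.comp_of_eq analyticAt_id.neg rfl

lemma besselK0_ofReal (x : ℝ) :
    besselK0 x = ((∫ t, Real.exp (-x * Real.cosh t)) / 2 : ℝ) := by
  have h := integral_comp_abs (f := fun t ↦ Real.exp (-x * Real.cosh t))
  simp only [Real.cosh_abs] at h
  rw [h, besselK0, mul_div_cancel_left₀ _ two_ne_zero, ← integral_complex_ofReal]
  simp

lemma besselK0_mul_ofReal_eq_integral (g : ℝ) {r : ℝ} (hr : 0 < r) :
    besselK0 (g * r : ℝ) = ((∫ t : ℝ,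
      Real.exp (-(g / 2 * r ^ 2 * Real.exp t) - g / 2 * Real.exp (-t))) / 2 : ℝ) := by
  rw [besselK0_ofReal, ← integral_add_right_eq_self _ (Real.log r)]
  congr 2
  refine integral_congr_ae (ae_of_all _ fun t ↦ ?_)
  have hcosh : Real.cosh (t + Real.log r) = (Real.exp t * r + Real.exp (-t) * r⁻¹) / 2 := by
    rw [Real.cosh_eq, neg_add, Real.exp_add, Real.exp_add, Real.exp_neg (Real.log r),
      Real.exp_log hr]
  simp only [hcosh]
  congr 1
  field_simp
  ring

lemma besselK0_mul_cpow_half {g : ℝ} (hg : 0 < g) {w : ℂ} (hw : 0 < w.re) :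
    besselK0 (g * w ^ ((1 : ℂ) / 2)) = (∫ t : ℝ, Complex.exp
      (-((g / 2 : ℝ) * w * (Real.exp t : ℝ)) - (g / 2 * Real.exp (-t) : ℝ))) / 2 := by
  have hL : AnalyticOnNhd ℂ (fun w : ℂ ↦ besselK0 (g * w ^ ((1 : ℂ) / 2))) {w | 0 < w.re} := by
    intro w hw
    have hre : 0 < (g * w ^ ((1 : ℂ) / 2)).re := by
      rw [Complex.re_ofReal_mul]
      exact mul_pos hg (Complex.re_cpow_half_pos hw)
    exact (analyticAt_besselK0 hre).comp_of_eq (analyticAt_const.mul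
      (analyticAt_id.cpow analyticAt_const (Or.inl hw))) rfl
  have hR : AnalyticOnNhd ℂ (fun w : ℂ ↦ (∫ t : ℝ, Complex.exp
      (-((g / 2 : ℝ) * w * (Real.exp t : ℝ)) - (g / 2 * Real.exp (-t) : ℝ))) / 2)
      {w | 0 < w.re} := by
    intro w hw
    have hre : 0 < ((g / 2 : ℝ) * w).re := by
      rw [Complex.re_ofReal_mul]
      exact mul_pos (half_pos hg) hw
    exact ((analyticAt_integral_cexp_exp_add_exp_neg (half_pos hg) hre).comp_of_eq
      (analyticAt_const.mul analyticAt_id) rfl).div_const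
  have hpre : IsPreconnected {w : ℂ | 0 < w.re} := (convex_halfSpace_re_gt 0).isPreconnected
  refine hL.eqOn_of_preconnected_of_frequently_eq hR hpre (z₀ := 1) (by simp) ?_ hw
  have hlim : Tendsto (fun x : ℝ ↦ (x : ℂ)) (𝓝[≠] 1) (𝓝[≠] 1) := by
    refine tendsto_nhdsWithin_of_tendsto_nhds_of_eventually_within _ ?_ ?_
    · exact Complex.continuous_ofReal.continuousAt.tendsto.mono_left nhdsWithin_le_nhds
    · filter_upwards [self_mem_nhdsWithin] with x hx
      simpa using hx
  refine hlim.frequently (Eventually.frequently ?_)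
  filter_upwards [nhdsWithin_le_nhds (lt_mem_nhds (zero_lt_one' ℝ))] with x hx
  rw [Complex.ofReal_cpow_half hx.le, ← Complex.ofReal_mul,
    besselK0_mul_ofReal_eq_integral g (Real.sqrt_pos.2 hx), Real.sq_sqrt hx.le, Complex.ofReal_div,
    ← integral_complex_ofReal]
  push_cast
  rfl

end

lemma Real.sqrt_pi_div_mul_exp {k : ℝ} (hk : 0 < k) (t : ℝ) :
    √(Real.pi / (k * Real.exp t)) = √(Real.pi / k) * Real.exp (-t / 2) := by
  rw [← div_div, div_eq_mul_inv (Real.pi / k), ← Real.exp_neg, Real.sqrt_mul (by positivity),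
    Real.exp_half]

section

variable (γ lam α δ c : ℝ)

/-- The integrand obtained by inserting the Gaussian mixture representation of `besselK0`
into the Fourier integral. -/
noncomputable def mixtureKernel (s t : ℝ) : ℂ :=
  Complex.exp (-((γ / 2 : ℝ) *
    ((lam : ℂ) ^ 2 * ((s : ℂ) - Complex.I * δ) ^ 2 + (α : ℂ) ^ 2) * (Real.exp t : ℝ)) -
      (γ / 2 * Real.exp (-t) : ℝ)) * Complex.exp (-Complex.I * c * s)

lemma mixtureKernel_eq_cexp_quadratic (s t : ℝ) :
    mixtureKernel γ lam α δ c s t = Complex.exp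
      (-((γ / 2 * lam ^ 2 * Real.exp t : ℝ) : ℂ) * s ^ 2 +
        Complex.I * (2 * (γ / 2 * lam ^ 2 * Real.exp t) * δ - c : ℝ) * s +
        (γ / 2 * lam ^ 2 * Real.exp t * δ ^ 2 - γ / 2 * α ^ 2 * Real.exp t -
          γ / 2 * Real.exp (-t) : ℝ)) := by
  rw [mixtureKernel, ← Complex.exp_add]
  congr 1
  push_cast
  linear_combination (-(γ / 2 : ℂ) * lam ^ 2 * Complex.exp t * δ ^ 2) * Complex.I_sq

lemma norm_mixtureKernel (s t : ℝ) :
    ‖mixtureKernel γ lam α δ c s t‖ = Real.exp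
      (-(γ / 2 * (α ^ 2 - lam ^ 2 * δ ^ 2)) * Real.exp t - γ / 2 * Real.exp (-t)) *
        Real.exp (-(γ / 2 * lam ^ 2 * Real.exp t) * s ^ 2) := by
  rw [mixtureKernel_eq_cexp_quadratic, Complex.norm_exp, ← Real.exp_add]
  congr 1
  rw [Complex.add_re, Complex.add_re, Complex.ofReal_re, mul_assoc Complex.I, Complex.I_mul_re,
    ← Complex.ofReal_mul, Complex.ofReal_im, ← Complex.ofReal_neg, ← Complex.ofReal_pow,
    ← Complex.ofReal_mul, Complex.ofReal_re]
  ring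

variable {γ lam}

lemma integrable_mixtureKernel_left (hγ : 0 < γ) (hlam : 0 < lam) (t : ℝ) :
    Integrable fun s ↦ mixtureKernel γ lam α δ c s t := by
  simp only [mixtureKernel_eq_cexp_quadratic]
  exact integrable_cexp_quadratic (by rw [Complex.ofReal_re]; positivity) _ _

lemma integral_mixtureKernel_left (hγ : 0 < γ) (hlam : 0 < lam) (t : ℝ) :
    ∫ s, mixtureKernel γ lam α δ c s t = (Real.exp (c * δ) * √(Real.pi / (γ / 2 * lam ^ 2)) *
      Real.exp (-t / 2 - γ / 2 * α ^ 2 * Real.exp t -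
        (γ ^ 2 * lam ^ 2 + c ^ 2) / (2 * γ * lam ^ 2) * Real.exp (-t)) : ℝ) := by
  have hb : 0 < γ / 2 * lam ^ 2 * Real.exp t := by positivity
  simp only [mixtureKernel_eq_cexp_quadratic]
  rw [integral_cexp_quadratic (by rw [Complex.neg_re, Complex.ofReal_re]; linarith), neg_neg,
    ← Complex.ofReal_div, Complex.ofReal_cpow_half (by positivity), mul_pow, Complex.I_sq,
    neg_one_mul]
  norm_cast
  rw [Real.sqrt_pi_div_mul_exp (by positivity), mul_assoc, mul_comm (Real.exp (c * δ)),
    mul_assoc _ (Real.exp (c * δ)), ← Real.exp_add, ← Real.exp_add]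
  congr 2
  rw [Real.exp_neg]
  field_simp
  ring

lemma integrable_mixtureKernel (hγ : 0 < γ) (hlam : 0 < lam) (hαδ : lam ^ 2 * δ ^ 2 < α ^ 2) :
    Integrable (Function.uncurry (mixtureKernel γ lam α δ c)) (volume.prod volume) := by
  have hcont : Continuous (Function.uncurry (mixtureKernel γ lam α δ c)) := by
    unfold mixtureKernel Function.uncurry
    fun_prop
  refine (integrable_prod_iff' hcont.aestronglyMeasurable).2
    ⟨ae_of_all _ fun t ↦ integrable_mixtureKernel_left α δ c hγ hlam t, ?_⟩
  have hA : 0 < γ / 2 * (α ^ 2 - lam ^ 2 * δ ^ 2) := mul_pos (half_pos hγ) (sub_pos.2 hαδ)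
  refine ((integrable_exp_mul_sub_exp_sub_exp_neg hA (half_pos hγ) (-1 / 2)).const_mul
    √(Real.pi / (γ / 2 * lam ^ 2))).congr (ae_of_all _ fun t ↦ ?_)
  simp only [Function.uncurry_apply_pair, norm_mixtureKernel]
  rw [integral_const_mul, integral_gaussian, Real.sqrt_pi_div_mul_exp (by positivity),
    mul_left_comm, ← Real.exp_add]
  congr 2
  ring

lemma besselK0_mul_cexp_eq_integral_mixtureKernel (hγ : 0 < γ)
    (hαδ : lam ^ 2 * δ ^ 2 < α ^ 2) (s : ℝ) :
    besselK0 ((γ : ℂ) *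
        (((lam : ℂ) ^ 2 * ((s : ℂ) - Complex.I * δ) ^ 2 + (α : ℂ) ^ 2) ^ ((1 : ℂ) / 2))) *
        Complex.exp (-Complex.I * c * s) = (∫ t, mixtureKernel γ lam α δ c s t) / 2 := by
  have hre : ((lam : ℂ) ^ 2 * ((s : ℂ) - Complex.I * δ) ^ 2 + (α : ℂ) ^ 2).re =
      lam ^ 2 * s ^ 2 + (α ^ 2 - lam ^ 2 * δ ^ 2) := by
    simp [pow_two]
    ring
  rw [besselK0_mul_cpow_half hγ (by rw [hre]; nlinarith [sq_nonneg (lam * s)]),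
    div_mul_eq_mul_div, ← integral_mul_const]
  rfl

end

theorem outer_fourier_integral_n_one (γ lam α δ : ℝ) (hγ : 0 < γ) (hlam : 0 < lam)
    (hα : 0 < α) (hαδ : lam * |δ| < α) (c : ℝ) :
    (∫ s : ℝ, besselK0 ((γ : ℂ) *
        (((lam : ℂ) ^ 2 * ((s : ℂ) - Complex.I * δ) ^ 2 + (α : ℂ) ^ 2) ^ ((1 : ℂ) / 2))) *
        Complex.exp (-Complex.I * c * s)) =
    ((Real.pi * Real.exp (c * δ) *
        Real.exp (-(α / lam) * Real.sqrt (γ ^ 2 * lam ^ 2 + c ^ 2)) /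
        Real.sqrt (γ ^ 2 * lam ^ 2 + c ^ 2) : ℝ) : ℂ) := by
  have hsq : lam ^ 2 * δ ^ 2 < α ^ 2 := by
    rw [← sq_abs δ, ← mul_pow]
    exact pow_lt_pow_left₀ hαδ (by positivity) two_ne_zero
  set R := γ ^ 2 * lam ^ 2 + c ^ 2 with hR
  have hRpos : 0 < R := by positivity
  simp only [besselK0_mul_cexp_eq_integral_mixtureKernel α δ c hγ hsq]
  rw [integral_div, integral_integral_swap (integrable_mixtureKernel α δ c hγ hlam hsq)]
  simp only [integral_mixtureKernel_left α δ c hγ hlam]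
  have hdecay : -2 * √(γ / 2 * α ^ 2 * (R / (2 * γ * lam ^ 2))) = -(α / lam) * √R := by
    rw [show γ / 2 * α ^ 2 * (R / (2 * γ * lam ^ 2)) = (α / (2 * lam)) ^ 2 * R by
      field_simp, Real.sqrt_mul (by positivity), Real.sqrt_sq (by positivity)]
    field_simp
  have hfactor : √(Real.pi / (γ / 2 * lam ^ 2)) * √(Real.pi / (R / (2 * γ * lam ^ 2))) =
      2 * Real.pi / √R := by
    rw [← Real.sqrt_mul (by positivity), show Real.pi / (γ / 2 * lam ^ 2) *
      (Real.pi / (R / (2 * γ * lam ^ 2))) = (2 * Real.pi) ^ 2 / R by field_simp,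
      Real.sqrt_div (by positivity), Real.sqrt_sq (by positivity)]
  rw [integral_complex_ofReal, integral_const_mul,
    integral_exp_neg_half_sub_exp_sub_exp_neg (by positivity) (by positivity), ← hR, hdecay]
  norm_cast
  linear_combination (Real.exp (c * δ) * Real.exp (-(α / lam) * √R) / 2) * hfactor
end
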